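/- With weights w_2 = λ and w_n = (n−1)! for n ≠ 2, for each fixed j ≥ 0 the quantity (1/Z_N)·C(N−j−1, j)·λ^j·(N−j−1)! converges to e^{−λ} λ^j / j! as N → ∞. Consequently, the random variable N − σ(s) (N minus the degree of the vertex next to the root of the random simply generated tree T_N) converges in distribution to Poisson(λ). -/

import Mathlib

open Filter

/-- Rooted planar trees (the tree hanging from the vertex `s` next to the root `r`;
the full tree of the paper with `N` edges corresponds to a `PTree` with `N` vertices,
plus the extra root `r` of degree 1 attached to the root `s` of the `PTree`). -/
inductive PTree : Type where
  | node : List PTree → PTree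

namespace PTree

/-- The (ordered) subtrees attached to the root. -/
def children : PTree → List PTree
  | node ts => ts

/-- Number of vertices of the `PTree`, i.e. the number `N` of edges of the paper's tree. -/
def size : PTree → ℕ
  | node ts => 1 + (ts.attach.map (fun t => size t.1)).sum
decreasing_by simp [PTree.node.sizeOf_spec]; have := List.sizeOf_lt_of_mem t.2; omega

/-- The weight `∏_{v ≠ r} w_{σ(v)}`: every vertex `v ≠ r` has degree `outdeg(v) + 1`. -/
noncomputable def weight (w : ℕ → ℝ) : PTree → ℝ
  | node ts => w (ts.length + 1) * (ts.attach.map (fun t => weight w t.1)).prod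
decreasing_by simp [PTree.node.sizeOf_spec]; have := List.sizeOf_lt_of_mem t.2; omega

/-- The number of vertices of outdegree `k`, i.e. the number `X_{k+1}` of vertices
(other than `r`) of degree `k+1`. -/
def countOutdeg (k : ℕ) : PTree → ℕ
  | node ts => (if ts.length = k then 1 else 0) + (ts.attach.map (fun t => countOutdeg k t.1)).sum
decreasing_by simp [PTree.node.sizeOf_spec]; have := List.sizeOf_lt_of_mem t.2; omega

/-- The maximal outdegree of a vertex of the tree. -/
def maxOutdeg : PTree → ℕ
  | node ts => max ts.length ((ts.attach.map (fun t => maxOutdeg t.1)).foldr max 0)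
decreasing_by simp [PTree.node.sizeOf_spec]; have := List.sizeOf_lt_of_mem t.2; omega

/-- Outdegree of the first (leftmost) child `s₁` of `s` (0 if there is none). -/
def firstChildOutdeg : PTree → ℕ
  | node [] => 0
  | node (t :: _) => t.children.length

end PTree

/-- The partition function `Z_N = Σ_{τ ∈ Γ_N} ∏_{v ∈ V(τ)∖{r}} w_{σ(v)}`. -/
noncomputable def Zfun (w : ℕ → ℝ) (N : ℕ) : ℝ :=
  ∑' t : {t : PTree // t.size = N}, t.1.weight w

/-- `ν_N(P)`: probability of the event `P` under the simply generated measure `ν_N`. -/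
noncomputable def nu (w : ℕ → ℝ) (N : ℕ) (P : PTree → Prop) : ℝ :=
  (∑' t : {t : PTree // t.size = N ∧ P t}, t.1.weight w) / Zfun w N

/-!
Deleting the root of the first tree of a planar forest gives a recursion for the total weight
`S(n, k)` of the forests with `n` vertices and `k` trees, and the recursion is solved by the
Lagrange inversion formula `n S(n, k) = k [xⁿ⁻ᵏ] Φⁿ` with `Φ = ∑ w_{i+1} xⁱ`.

Write `Φ = 1 + x Q`, so that `Q(0) = λ` and `[xᵉ] Q ∼ (e + 1)!`. In a product of series with
coefficients of factorial growth, one of the factors takes all but a bounded part of the degree;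
hence `[xᵉ] Qⁱ ∼ i λⁱ⁻¹ (e + 1)!`, and the binomial expansion of `Φⁿ⁺¹` yields
`(n + 1) Z_{n+1} = [xⁿ] Φⁿ⁺¹ ∼ (n + 1)! ∑ i λⁱ⁻¹ / i! = (n + 1)! e^λ`.
On the other hand `[xʲ] Φⁿ ∼ nʲ λʲ / j!` for fixed `j`, and the quotient is the Poisson weight.
-/

open Finset PowerSeries
open scoped Nat PowerSeries Topology

namespace PTree

theorem size_node (ts : List PTree) : (node ts).size = 1 + (ts.map size).sum := by
  rw [size, List.attach_map_val]

theorem weight_node (w : ℕ → ℝ) (ts : List PTree) :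
    (node ts).weight w = w (ts.length + 1) * (ts.map (weight w)).prod := by
  rw [weight, List.attach_map_val]

theorem size_pos (t : PTree) : 0 < t.size := by
  cases t
  rw [size_node]
  omega

theorem length_le_sum_map_size (ts : List PTree) : ts.length ≤ (ts.map size).sum := by
  have hsize : ∀ n ∈ ts.map size, 1 ≤ n := by simpa using fun t _ => t.size_pos.nat_succ_le
  simpa using List.card_nsmul_le_sum _ 1 hsize

open Classical in
/-- The planar forests with `n` vertices and `k` trees. A nonempty forest is encoded by the number
`i` of children of the root of its first tree and by the forest of `k - 1 + i` trees left after
deleting that root. -/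
noncomputable def forests : ℕ → ℕ → Finset (List PTree)
  | 0, 0 => {[]}
  | 0, _ + 1 => ∅
  | _ + 1, 0 => ∅
  | n + 1, k + 1 =>
    ((range (n + 1 - k)).sigma fun i => forests n (k + i)).image
      fun p => node (p.2.take p.1) :: p.2.drop p.1

theorem mem_forests {n k : ℕ} {ts : List PTree} :
    ts ∈ forests n k ↔ ts.length = k ∧ (ts.map size).sum = n := by
  induction n generalizing k ts with
  | zero =>
    have hlength := length_le_sum_map_size ts
    rcases k with _ | k
    · simp +contextual [forests]
    · simp only [forests, notMem_empty, false_iff]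
      omega
  | succ n ih =>
    rcases k with _ | k
    · simp +contextual [forests]
    simp only [forests, mem_image, mem_sigma, mem_range, ih, Sigma.exists]
    constructor
    · rintro ⟨i, us, ⟨-, hlength, hsize⟩, rfl⟩
      refine ⟨by simp only [List.length_cons, List.length_drop]; omega, ?_⟩
      rw [List.map_cons, List.sum_cons, size_node, add_assoc, ← List.sum_append,
        ← List.map_append, List.take_append_drop, hsize, add_comm]
    · rintro ⟨hlength, hsize⟩
      obtain _ | ⟨⟨us⟩, vs⟩ := ts
      · simp at hlength
      rw [List.length_cons] at hlength
      rw [List.map_cons, List.sum_cons, size_node] at hsize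
      have hus := length_le_sum_map_size us
      have hvs := length_le_sum_map_size vs
      refine ⟨us.length, us ++ vs, ⟨by omega, ?_, ?_⟩, by simp⟩
      · rw [List.length_append]; omega
      · rw [List.map_append, List.sum_append]; omega

/-- The total weight of the planar forests with `n` vertices and `k` trees, where the weight of a
forest is the product of the weights of its trees. -/
noncomputable def forestWeight (w : ℕ → ℝ) (n k : ℕ) : ℝ :=
  ∑ ts ∈ forests n k, (ts.map (weight w)).prod

theorem forestWeight_zero_zero (w : ℕ → ℝ) : forestWeight w 0 0 = 1 := by
  simp [forestWeight, forests]

theorem forestWeight_succ_zero (w : ℕ → ℝ) (n : ℕ) : forestWeight w (n + 1) 0 = 0 := by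
  simp [forestWeight, forests]

theorem forestWeight_succ_succ (w : ℕ → ℝ) (k j : ℕ) :
    forestWeight w (k + j + 1) (k + 1) =
      ∑ p ∈ antidiagonal j, w (p.1 + 1) * forestWeight w (k + j) (k + p.1) := by
  classical
  have hrange : k + j + 1 - k = j + 1 := by omega
  rw [Nat.sum_antidiagonal_eq_sum_range_succ_mk, forestWeight, forests, hrange, sum_image,
    sum_sigma]
  · refine sum_congr rfl fun i _ => ?_
    rw [forestWeight, mul_sum]
    refine sum_congr rfl fun ts hts => ?_
    have hi : i ≤ ts.length := (mem_forests.1 hts).1 ▸ Nat.le_add_left i k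
    rw [List.map_cons, List.prod_cons, weight_node, mul_assoc, ← List.prod_append,
      ← List.map_append, List.take_append_drop, List.length_take_of_le hi]
  · rintro ⟨i, ts⟩ hts ⟨i', ts'⟩ hts' heq
    simp only [coe_sigma, Set.mem_sigma_iff, mem_coe, mem_forests] at hts hts'
    simp only [List.cons.injEq, PTree.node.injEq] at heq
    have hi : i = i' := by
      have := congrArg List.length heq.1
      simp only [List.length_take] at this
      omega
    have hts_eq : ts = ts' := by
      rw [← List.take_append_drop i ts, heq.1, heq.2, List.take_append_drop]
    rw [hi, hts_eq]

theorem tsum_weight_subtype (w : ℕ → ℝ) {P : PTree → Prop} {s : Finset PTree}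
    (hs : ∀ t, t ∈ s ↔ P t) : ∑' t : {t // P t}, t.1.weight w = ∑ t ∈ s, t.weight w := by
  obtain rfl : (· ∈ s) = P := funext fun t => propext (hs t)
  exact Finset.tsum_subtype s (weight w)

theorem Zfun_eq_forestWeight (w : ℕ → ℝ) (n : ℕ) : Zfun w n = forestWeight w n 1 := by
  have hinj : Function.Injective fun t : PTree => [t] := List.singleton_injective
  rw [Zfun, tsum_weight_subtype w (s := (forests n 1).preimage _ hinj.injOn), forestWeight,
    ← sum_preimage _ _ hinj.injOn]
  · simp only [List.map_singleton, List.prod_singleton]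
  · intro ts hts hrange
    obtain ⟨t, rfl⟩ := List.length_eq_one_iff.1 (mem_forests.1 hts).1
    exact absurd (Set.mem_range_self t) hrange
  · simp [mem_forests]

theorem nu_congr (w : ℕ → ℝ) {N : ℕ} {P Q : PTree → Prop}
    (h : ∀ t, t.size = N → (P t ↔ Q t)) : nu w N P = nu w N Q := by
  rw [nu, nu, ← (Equiv.subtypeEquivRight fun t => and_congr_right (h t)).tsum_eq]
  rfl

theorem nu_length_children_eq (w : ℕ → ℝ) (n k : ℕ) :
    nu w (n + 1) (fun t => t.children.length = k) =
      w (k + 1) * forestWeight w n k / Zfun w (n + 1) := by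
  have hnode : Function.Injective node := fun _ _ => PTree.node.inj
  rw [nu, tsum_weight_subtype w (s := (forests n k).map ⟨node, hnode⟩), sum_map, forestWeight,
    mul_sum]
  · congr 1
    refine sum_congr rfl fun ts hts => ?_
    rw [Function.Embedding.coeFn_mk, weight_node, (mem_forests.1 hts).1]
  · rintro ⟨ts⟩
    simp [mem_forests, size_node, children, and_comm, add_comm 1]

theorem nu_sub_degree_eq (w : ℕ → ℝ) (k j : ℕ) :
    nu w (k + (j + 1)) (fun t => k + (j + 1) - (t.children.length + 1) = j) =
      w (k + 1) * forestWeight w (k + j) k / Zfun w (k + (j + 1)) := by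
  rw [← add_assoc, ← nu_length_children_eq]
  refine nu_congr w fun t ht => ?_
  obtain ⟨ts⟩ := t
  have hlength := length_le_sum_map_size ts
  rw [size_node] at ht
  rw [children]
  omega

end PTree

section PowerSeriesCoefficients

variable {R : Type*} [CommSemiring R]

theorem coeff_X_mul_derivative (f : R⟦X⟧) (n : ℕ) :
    coeff n (X * d⁄dX R f) = n * coeff n f := by
  rcases n with _ | n
  · simp
  · rw [coeff_succ_X_mul, coeff_derivative, Nat.cast_succ, mul_comm]

theorem succ_mul_sum_antidiagonal_coeff_mul_coeff_pow (f : R⟦X⟧) (n j : ℕ) :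
    (n + 1) * ∑ p ∈ antidiagonal j, p.1 * coeff p.1 f * coeff p.2 (f ^ n) =
      j * coeff j (f ^ (n + 1)) := by
  have hderiv : X * d⁄dX R (f ^ (n + 1)) = C ((n : R) + 1) * (X * d⁄dX R f * f ^ n) := by
    rw [derivative_pow, Nat.add_sub_cancel, Nat.cast_succ, map_add, map_natCast, map_one]
    ring
  rw [← coeff_X_mul_derivative, hderiv, coeff_C_mul, coeff_mul]
  simp only [coeff_X_mul_derivative]

theorem coeff_one_add_X_mul_pow (f : R⟦X⟧) (n j : ℕ) :
    coeff j ((1 + X * f) ^ n) =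
      ∑ i ∈ range (j + 1), (n.choose i : R) * coeff (j - i) (f ^ i) := by
  have hterm (i : ℕ) : coeff j ((X * f) ^ i * 1 ^ (n - i) * (n.choose i : R⟦X⟧)) =
      if i ≤ j then (n.choose i : R) * coeff (j - i) (f ^ i) else 0 := by
    have hreorder : (X * f) ^ i * 1 ^ (n - i) * (n.choose i : R⟦X⟧) =
        C (n.choose i : R) * (X ^ i * f ^ i) := by
      rw [map_natCast]
      ring
    rw [hreorder, coeff_C_mul, coeff_X_pow_mul', mul_ite, mul_zero]
  rw [add_comm, add_pow, map_sum]
  simp only [hterm]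
  rw [← sum_filter]
  refine sum_subset (fun i hi => ?_) fun i _ hi => ?_
  · simp only [mem_filter, mem_range] at hi ⊢
    omega
  · simp only [mem_filter, mem_range] at *
    rw [Nat.choose_eq_zero_of_lt (by omega), Nat.cast_zero, zero_mul]

end PowerSeriesCoefficients

namespace PTree

/-- The generating series `Φ = ∑ w_{i+1} xⁱ` of the vertex weights by outdegree. -/
noncomputable def weightSeries (w : ℕ → ℝ) : ℝ⟦X⟧ :=
  PowerSeries.mk fun i => w (i + 1)

theorem mul_forestWeight_eq_mul_coeff_pow (w : ℕ → ℝ) {n k j : ℕ} (h : k + j = n) :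
    n * forestWeight w n k = k * coeff j (weightSeries w ^ n) := by
  induction n generalizing k j with
  | zero =>
    obtain ⟨rfl, rfl⟩ : k = 0 ∧ j = 0 := by omega
    simp
  | succ n ih =>
    obtain _ | k := k
    · simp [forestWeight_succ_zero]
    obtain rfl : k + j = n := by omega
    obtain h_zero | h_pos := (k + j).eq_zero_or_pos
    · obtain ⟨rfl, rfl⟩ : k = 0 ∧ j = 0 := by omega
      simp [forestWeight_succ_succ w 0 0, forestWeight_zero_zero, weightSeries]
    set f := weightSeries w with hf
    have h_rec : ((k + j : ℕ) : ℝ) * forestWeight w (k + j + 1) (k + 1) =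
        k * coeff j (f ^ (k + j + 1)) +
          ∑ p ∈ antidiagonal j, p.1 * coeff p.1 f * coeff p.2 (f ^ (k + j)) := by
      rw [forestWeight_succ_succ, pow_succ', coeff_mul, mul_sum, mul_sum, ← sum_add_distrib]
      refine sum_congr rfl fun p hp => ?_
      have h_ih := ih (k := k + p.1) (j := p.2) (by rw [add_assoc, mem_antidiagonal.1 hp])
      rw [mul_left_comm, h_ih, hf, weightSeries, coeff_mk]
      push_cast
      ring
    have h_deriv := succ_mul_sum_antidiagonal_coeff_mul_coeff_pow f (k + j) j
    refine mul_left_cancel₀ (Nat.cast_ne_zero (R := ℝ).2 h_pos.ne') ?_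
    push_cast at h_rec h_deriv ⊢
    linear_combination ((k : ℝ) + j + 1) * h_rec + h_deriv

theorem succ_mul_Zfun_succ (w : ℕ → ℝ) (n : ℕ) :
    (n + 1) * Zfun w (n + 1) = coeff n (weightSeries w ^ (n + 1)) := by
  simpa [Zfun_eq_forestWeight] using mul_forestWeight_eq_mul_coeff_pow w (add_comm 1 n)

theorem weightSeries_eq_one_add_X_mul {w : ℕ → ℝ} (hw : w 1 = 1) :
    weightSeries w = 1 + X * PowerSeries.mk fun e => w (e + 2) := by
  ext (_ | i) <;> simp [weightSeries, coeff_succ_X_mul, coeff_one, hw]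

end PTree

section FactorialGrowth

theorem factorial_add_mul_factorial_add_le (c a b : ℕ) :
    (a + c)! * (b + c)! ≤ c ! * (a + b + c)! := by
  induction a with
  | zero => simp
  | succ a ih =>
    calc (a + 1 + c)! * (b + c)! = (a + c + 1) * ((a + c)! * (b + c)!) := by
          rw [add_right_comm, Nat.factorial_succ, mul_assoc]
      _ ≤ (a + b + c + 1) * (c ! * (a + b + c)!) := Nat.mul_le_mul (by omega) ih
      _ = c ! * (a + 1 + b + c)! := by
          rw [show a + 1 + b + c = a + b + c + 1 by omega, Nat.factorial_succ]
          ring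

theorem sum_antidiagonal_factorial_add_mul_factorial_add_le (c n : ℕ) :
    ∑ p ∈ antidiagonal n, (p.1 + c)! * (p.2 + c)! ≤ (2 * c ! + (c + 1)!) * (n + c)! := by
  obtain _ | _ | n := n
  · simp only [Nat.antidiagonal_zero, sum_singleton, zero_add]
    exact Nat.mul_le_mul_right _ (by omega)
  · simp only [Nat.sum_antidiagonal_succ, Nat.antidiagonal_zero, sum_singleton, zero_add]
    nlinarith [Nat.zero_le ((c + 1)! * (1 + c)!)]
  have h_inner : ∑ p ∈ antidiagonal n, (p.1 + 1 + c)! * (p.2 + 1 + c)! ≤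
      (c + 1)! * (n + 2 + c)! :=
    calc ∑ p ∈ antidiagonal n, (p.1 + 1 + c)! * (p.2 + 1 + c)!
        ≤ ∑ _p ∈ antidiagonal n, (c + 1)! * (n + c + 1)! := by
          refine sum_le_sum fun p hp => ?_
          have := factorial_add_mul_factorial_add_le (c + 1) p.1 p.2
          rwa [mem_antidiagonal.1 hp, ← add_assoc, ← add_assoc, ← add_assoc, add_right_comm p.1,
            add_right_comm p.2] at this
      _ = (n + 1) * ((c + 1)! * (n + c + 1)!) := by
          rw [sum_const, Nat.card_antidiagonal, smul_eq_mul]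
      _ ≤ (n + c + 2) * ((c + 1)! * (n + c + 1)!) :=
          Nat.mul_le_mul_right _ (by omega)
      _ = (c + 1)! * (n + 2 + c)! := by
          rw [add_right_comm n 2 c, Nat.factorial_succ (n + c + 1)]
          ring
  rw [Nat.sum_antidiagonal_succ, Nat.sum_antidiagonal_succ']
  simp only [zero_add]
  linarith

theorem norm_sum_antidiagonal_mul_le {R : Type*} [SeminormedRing R] {u v : ℕ → R} {A B : ℝ} {c : ℕ}
    (hu : ∀ e, ‖u e‖ ≤ A * (e + c)!) (hv : ∀ e, ‖v e‖ ≤ B * (e + c)!) (n : ℕ) :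
    ‖∑ p ∈ antidiagonal n, u p.1 * v p.2‖ ≤ A * B * ((2 * c ! + (c + 1)!) * (n + c)!) := by
  have hA : 0 ≤ A := nonneg_of_mul_nonneg_left ((norm_nonneg _).trans (hu 0)) (by positivity)
  have hB : 0 ≤ B := nonneg_of_mul_nonneg_left ((norm_nonneg _).trans (hv 0)) (by positivity)
  calc ‖∑ p ∈ antidiagonal n, u p.1 * v p.2‖
      ≤ ∑ p ∈ antidiagonal n, A * B * ((p.1 + c)! * (p.2 + c)!) := by
        refine norm_sum_le_of_le _ fun p _ => (norm_mul_le _ _).trans ?_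
        rw [mul_mul_mul_comm]
        exact mul_le_mul (hu _) (hv _) (norm_nonneg _) (by positivity)
    _ ≤ A * B * ((2 * c ! + (c + 1)!) * (n + c)!) := by
        rw [← mul_sum]
        gcongr
        exact_mod_cast sum_antidiagonal_factorial_add_mul_factorial_add_le c n

theorem norm_coeff_pow_le {R : Type*} [SeminormedRing R] [NormOneClass R] {f : R⟦X⟧} {A : ℝ}
    (hf : ∀ e, ‖coeff e f‖ ≤ A * (e + 1)!) (i e : ℕ) :
    ‖coeff e (f ^ i)‖ ≤ (4 * A) ^ i * (e + 1)! := by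
  induction i generalizing e with
  | zero =>
    rw [pow_zero, pow_zero, one_mul, coeff_one]
    split_ifs
    · simpa using Nat.one_le_cast (α := ℝ).2 (e + 1).factorial_pos
    · simp
  | succ i ih =>
    rw [pow_succ, coeff_mul]
    refine (norm_sum_antidiagonal_mul_le (c := 1) ih hf e).trans_eq ?_
    norm_num [Nat.factorial]
    ring

variable {𝕜 : Type*} [RCLike 𝕜]

theorem hasSum_mul_pow_pred_div_factorial (x : 𝕜) :
    HasSum (fun i : ℕ => i * x ^ (i - 1) / (i ! : 𝕜)) (NormedSpace.exp x) := by
  have h_succ (i : ℕ) :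
      ((i + 1 : ℕ) : 𝕜) * x ^ (i + 1 - 1) / ((i + 1)! : 𝕜) = x ^ i / (i ! : 𝕜) := by
    rw [Nat.add_sub_cancel, Nat.factorial_succ, Nat.cast_mul,
      mul_div_mul_left _ _ (Nat.cast_ne_zero.2 i.succ_ne_zero)]
  rw [← hasSum_nat_add_iff' 1]
  simp only [h_succ, range_one, sum_singleton, Nat.cast_zero, zero_mul, zero_div, sub_zero]
  exact NormedSpace.expSeries_div_hasSum_exp x

/-- The coefficients of `f` grow like `α (e + 1)!`, so that those of `1 + X * f` grow like
`α e!`. -/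
def HasFactorialGrowth (f : 𝕜⟦X⟧) (α : 𝕜) : Prop :=
  Tendsto (fun e => coeff e f / ((e + 1)! : 𝕜)) atTop (𝓝 α)

namespace HasFactorialGrowth

variable {f g : 𝕜⟦X⟧} {α β : 𝕜}

theorem one : HasFactorialGrowth (1 : 𝕜⟦X⟧) 0 :=
  tendsto_const_nhds.congr' <| by
    filter_upwards [eventually_ne_atTop 0] with e he
    rw [coeff_one, if_neg he, zero_div]

theorem exists_norm_coeff_le (hf : HasFactorialGrowth f α) :
    ∃ A : ℝ, ∀ e, ‖coeff e f‖ ≤ A * (e + 1)! := by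
  obtain ⟨A, hA⟩ := (Metric.isBounded_range_of_tendsto _ hf).exists_norm_le
  refine ⟨A, fun e => ?_⟩
  have := hA _ (Set.mem_range_self e)
  rwa [norm_div, RCLike.norm_natCast, div_le_iff₀ (by positivity)] at this

theorem tendsto_inner_sum (hf : HasFactorialGrowth f α) (hg : HasFactorialGrowth g β) :
    Tendsto (fun e => (∑ p ∈ antidiagonal e, coeff (p.1 + 1) f * coeff (p.2 + 1) g) /
      ((e + 3)! : 𝕜)) atTop (𝓝 0) := by
  obtain ⟨A, hA⟩ := hf.exists_norm_coeff_le
  obtain ⟨B, hB⟩ := hg.exists_norm_coeff_le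
  have h_zero : Tendsto (fun e : ℕ => A * B * 10 / ((e + 3 : ℕ) : ℝ)) atTop (𝓝 0) :=
    (tendsto_const_div_atTop_nhds_zero_nat _).comp (tendsto_add_atTop_nat 3)
  refine squeeze_zero_norm (fun e => ?_) h_zero
  have h_sum : ‖∑ p ∈ antidiagonal e, coeff (p.1 + 1) f * coeff (p.2 + 1) g‖ ≤
      A * B * 10 * (e + 2)! :=
    (norm_sum_antidiagonal_mul_le (c := 2) (fun e => hA (e + 1)) (fun e => hB (e + 1)) e).trans_eq
      (by norm_num [Nat.factorial, mul_assoc])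
  rw [norm_div, RCLike.norm_natCast, div_le_div_iff₀ (by positivity) (by positivity)]
  calc _ ≤ A * B * 10 * (e + 2)! * ((e + 3 : ℕ) : ℝ) := by gcongr
    _ = A * B * 10 * (e + 3)! := by
      rw [Nat.factorial_succ (e + 2)]
      push_cast
      ring

theorem mul (hf : HasFactorialGrowth f α) (hg : HasFactorialGrowth g β) :
    HasFactorialGrowth (f * g) (coeff 0 f * β + α * coeff 0 g) := by
  have h_inner := tendsto_inner_sum hf hg
  rw [HasFactorialGrowth, ← tendsto_add_atTop_iff_nat 2] at hf hg ⊢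
  rw [← add_zero (_ + _)]
  refine (((hg.const_mul (coeff 0 f)).add (hf.mul_const (coeff 0 g))).add h_inner).congr fun e => ?_
  rw [coeff_mul, Nat.sum_antidiagonal_succ, Nat.sum_antidiagonal_succ']
  ring

theorem pow (hf : HasFactorialGrowth f α) (i : ℕ) :
    HasFactorialGrowth (f ^ i) (i * coeff 0 f ^ (i - 1) * α) := by
  induction i with
  | zero => simpa using one
  | succ i ih =>
    rw [pow_succ']
    convert hf.mul ih using 1
    obtain _ | i := i
    · simp
    · simp only [coeff_zero_eq_constantCoeff, map_pow, Nat.add_sub_cancel]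
      push_cast
      ring

theorem tendsto_coeff_one_add_X_mul_pow (hf : HasFactorialGrowth f α) :
    Tendsto (fun n : ℕ => coeff n ((1 + X * f) ^ (n + 1)) / ((n + 1)! : 𝕜)) atTop
      (𝓝 (α * NormedSpace.exp (coeff 0 f))) := by
  let term (n i : ℕ) : 𝕜 :=
    if i ≤ n then coeff (n - i) (f ^ i) / ((n - i + 1)! : 𝕜) / (i ! : 𝕜) else 0
  have h_sum (n : ℕ) :
      ∑' i, term n i = coeff n ((1 + X * f) ^ (n + 1)) / ((n + 1)! : 𝕜) := by
    rw [tsum_eq_sum (s := range (n + 1)) fun i hi => if_neg (by simpa using hi),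
      coeff_one_add_X_mul_pow, sum_div]
    refine sum_congr rfl fun i hi => ?_
    have h_le : i ≤ n := mem_range_succ_iff.1 hi
    rw [if_pos h_le, Nat.cast_choose 𝕜 (h_le.trans n.le_succ), Nat.succ_sub h_le]
    have := Nat.cast_ne_zero (R := 𝕜).2 (n + 1).factorial_ne_zero
    field_simp
  have h_exp : HasSum (fun i : ℕ => i * coeff 0 f ^ (i - 1) * α / (i ! : 𝕜))
      (α * NormedSpace.exp (coeff 0 f)) := by
    simpa only [mul_comm α, div_mul_eq_mul_div] using
      (hasSum_mul_pow_pred_div_factorial (coeff 0 f)).mul_left α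
  obtain ⟨A, hA⟩ := hf.exists_norm_coeff_le
  have hA_nonneg : 0 ≤ A := by simpa using (norm_nonneg _).trans (hA 0)
  simp only [← h_sum, ← h_exp.tsum_eq]
  refine tendsto_tsum_of_dominated_convergence (Real.summable_pow_div_factorial (4 * A))
    (fun i => ?_) (Eventually.of_forall fun n i => ?_)
  · rw [← tendsto_add_atTop_iff_nat i]
    simpa [term] using (hf.pow i).div_const (i ! : 𝕜)
  · simp only [term]
    split_ifs
    · rw [norm_div, norm_div, RCLike.norm_natCast, RCLike.norm_natCast]
      gcongr
      exact div_le_of_le_mul₀ (by positivity) (by positivity)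
        (norm_coeff_pow_le hA i _)
    · rw [norm_zero]
      positivity

end HasFactorialGrowth

end FactorialGrowth

section PolynomialGrowth

theorem tendsto_choose_mul_pow_div_pow (x : ℝ) (j : ℕ) :
    Tendsto (fun n : ℕ => n.choose j * x ^ j / (n : ℝ) ^ j) atTop (𝓝 (x ^ j / j !)) := by
  have h_const : Tendsto (fun n : ℕ => (n : ℝ) * (x / n)) atTop (𝓝 x) :=
    tendsto_const_nhds.congr' <| by
      filter_upwards [eventually_ne_atTop 0] with n hn
      rw [mul_div_cancel₀ _ (Nat.cast_ne_zero.2 hn)]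
  simpa only [div_pow, mul_div_assoc] using
    ProbabilityTheory.tendsto_choose_mul_pow_atTop j h_const

theorem tendsto_pow_mul_factorial_div_factorial_add (j : ℕ) :
    Tendsto (fun k : ℕ => (k : ℝ) ^ j * k ! / (k + j)!) atTop (𝓝 1) := by
  induction j with
  | zero =>
    refine tendsto_const_nhds.congr fun k => ?_
    rw [pow_zero, one_mul, add_zero, div_self (Nat.cast_ne_zero.2 k.factorial_ne_zero)]
  | succ j ih =>
    have h_mul := ih.mul (tendsto_natCast_div_add_atTop ((j : ℝ) + 1))
    rw [mul_one] at h_mul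
    refine h_mul.congr fun k => ?_
    rw [div_mul_div_comm, ← add_assoc k j 1, Nat.factorial_succ]
    push_cast
    congr 1 <;> ring

theorem tendsto_coeff_one_add_X_mul_pow_div_pow (f : ℝ⟦X⟧) (j : ℕ) :
    Tendsto (fun n : ℕ => coeff j ((1 + X * f) ^ n) / (n : ℝ) ^ j) atTop
      (𝓝 (coeff 0 f ^ j / j !)) := by
  have h_lower : ∀ i ∈ range j,
      Tendsto (fun n : ℕ => n.choose i * coeff (j - i) (f ^ i) / (n : ℝ) ^ j) atTop (𝓝 0) := by
    intro i hi
    have h_lt : i < j := mem_range.1 hi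
    have h_inv : Tendsto (fun n : ℕ => ((n : ℝ) ^ (j - i))⁻¹) atTop (𝓝 0) :=
      ((tendsto_pow_atTop (Nat.sub_ne_zero_of_lt h_lt)).comp
        tendsto_natCast_atTop_atTop).inv_tendsto_atTop
    have h_mul := ((tendsto_choose_mul_pow_div_pow 1 i).mul h_inv).mul_const (coeff (j - i) (f ^ i))
    rw [mul_zero, zero_mul] at h_mul
    refine h_mul.congr fun n => ?_
    rw [← pow_mul_pow_sub (n : ℝ) h_lt.le]
    ring
  have h_top : Tendsto (fun n : ℕ => n.choose j * coeff (j - j) (f ^ j) / (n : ℝ) ^ j) atTop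
      (𝓝 (coeff 0 f ^ j / j !)) := by
    simpa using tendsto_choose_mul_pow_div_pow (coeff 0 f) j
  simp only [coeff_one_add_X_mul_pow, sum_range_succ _ j, add_div, sum_div]
  simpa using (tendsto_finsetSum _ h_lower).add h_top

end PolynomialGrowth

section PoissonLimit

variable {w : ℕ → ℝ} {l α : ℝ}

theorem tendsto_Zfun_succ_div_factorial (hw_one : w 1 = 1) (hw_two : w 2 = l)
    (hw : Tendsto (fun n => w (n + 1) / n !) atTop (𝓝 α)) :
    Tendsto (fun n => Zfun w (n + 1) / n !) atTop (𝓝 (α * Real.exp l)) := by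
  have h_growth : HasFactorialGrowth (PowerSeries.mk fun e => w (e + 2)) α := by
    simpa [HasFactorialGrowth] using (tendsto_add_atTop_iff_nat 1).2 hw
  have h_coeff := h_growth.tendsto_coeff_one_add_X_mul_pow
  rw [coeff_mk, zero_add, hw_two, ← Real.exp_eq_exp_ℝ] at h_coeff
  refine h_coeff.congr fun n => ?_
  rw [← PTree.weightSeries_eq_one_add_X_mul hw_one, ← PTree.succ_mul_Zfun_succ, Nat.factorial_succ,
    Nat.cast_mul, Nat.cast_succ, mul_div_mul_left _ _ n.cast_add_one_ne_zero]

theorem tendsto_mul_factorial_div_Zfun (hw_one : w 1 = 1) (hw_two : w 2 = l) (hα : α ≠ 0)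
    (hw : Tendsto (fun n => w (n + 1) / n !) atTop (𝓝 α)) {a : ℕ → ℝ} {c : ℝ} {j : ℕ}
    (ha : Tendsto (fun k => a k / (k : ℝ) ^ j) atTop (𝓝 c)) :
    Tendsto (fun k => a k * k ! / Zfun w (k + (j + 1))) atTop
      (𝓝 (α⁻¹ * (Real.exp (-l) * c))) := by
  have h_Z := (tendsto_Zfun_succ_div_factorial hw_one hw_two hw).comp (tendsto_add_atTop_nat j)
  have h_quot := (ha.mul (tendsto_pow_mul_factorial_div_factorial_add j)).div h_Z
    (mul_ne_zero hα (Real.exp_ne_zero l))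
  have h_limit : c * 1 / (α * Real.exp l) = α⁻¹ * (Real.exp (-l) * c) := by
    rw [Real.exp_neg]
    ring
  rw [h_limit] at h_quot
  refine h_quot.congr' ?_
  filter_upwards [eventually_ne_atTop 0] with k hk
  simp only [Pi.div_apply, Function.comp_apply, add_assoc]
  field_simp

theorem nu_sub_degree_eq_mul_coeff (w : ℕ → ℝ) {k : ℕ} (hk : k ≠ 0) (j : ℕ) :
    nu w (k + (j + 1)) (fun t => k + (j + 1) - (t.children.length + 1) = j) =
      w (k + 1) / k ! * (k / (k + j) * coeff j (PTree.weightSeries w ^ (k + j)) * k ! /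
        Zfun w (k + (j + 1))) := by
  have h_lagrange := PTree.mul_forestWeight_eq_mul_coeff_pow w (rfl : k + j = k + j)
  have h_pos : (k : ℝ) + j ≠ 0 := by positivity
  rw [PTree.nu_sub_degree_eq, div_mul_eq_mul_div (k : ℝ), ← h_lagrange, Nat.cast_add,
    mul_div_cancel_left₀ _ h_pos]
  field_simp

theorem tendsto_choose_mul_pow_mul_factorial_div_Zfun (hw_one : w 1 = 1) (hw_two : w 2 = l)
    (hα : α ≠ 0) (hw : Tendsto (fun n => w (n + 1) / n !) atTop (𝓝 α)) (j : ℕ) :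
    Tendsto (fun N : ℕ => ((N - j - 1).choose j : ℝ) * l ^ j * (N - j - 1)! / Zfun w N) atTop
      (𝓝 (α⁻¹ * (Real.exp (-l) * l ^ j / j !))) := by
  rw [← tendsto_add_atTop_iff_nat (j + 1), mul_div_assoc]
  simpa only [Nat.sub_sub, Nat.add_sub_cancel] using
    tendsto_mul_factorial_div_Zfun hw_one hw_two hα hw (tendsto_choose_mul_pow_div_pow l j)

theorem tendsto_nu_sub_degree (hw_one : w 1 = 1) (hw_two : w 2 = l)
    (hα : α ≠ 0) (hw : Tendsto (fun n => w (n + 1) / n !) atTop (𝓝 α)) (j : ℕ) :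
    Tendsto (fun N : ℕ => nu w N (fun t => N - (t.children.length + 1) = j)) atTop
      (𝓝 (Real.exp (-l) * l ^ j / j !)) := by
  have h_ratio := tendsto_natCast_div_add_atTop (j : ℝ)
  have h_coeff : Tendsto (fun k : ℕ =>
      k / (k + j) * coeff j (PTree.weightSeries w ^ (k + j)) / (k : ℝ) ^ j) atTop
      (𝓝 (l ^ j / j !)) := by
    have h_pow := (tendsto_coeff_one_add_X_mul_pow_div_pow
      (PowerSeries.mk fun e => w (e + 2)) j).comp (tendsto_add_atTop_nat j)
    rw [coeff_mk, zero_add, hw_two, ← PTree.weightSeries_eq_one_add_X_mul hw_one] at h_pow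
    have h_quot := (h_ratio.mul h_pow).div (h_ratio.pow j) (by simp)
    rw [one_pow, div_one, one_mul] at h_quot
    refine h_quot.congr' ?_
    filter_upwards [eventually_ne_atTop 0] with k hk
    simp only [Pi.div_apply, Function.comp_apply, Nat.cast_add, div_pow]
    field_simp
  have h_prob := hw.mul (tendsto_mul_factorial_div_Zfun hw_one hw_two hα hw h_coeff)
  rw [mul_inv_cancel_left₀ hα, ← mul_div_assoc] at h_prob
  rw [← tendsto_add_atTop_iff_nat (j + 1)]
  refine h_prob.congr' ?_
  filter_upwards [eventually_ne_atTop 0] with k hk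
  exact (nu_sub_degree_eq_mul_coeff w hk j).symm

theorem stmt_6_general (hw_one : w 1 = 1) (hw_two : w 2 = l) (hα : α ≠ 0)
    (hw : Tendsto (fun n => w (n + 1) / n !) atTop (𝓝 α)) :
    (∀ j : ℕ, Tendsto (fun N : ℕ =>
        ((N - j - 1).choose j : ℝ) * l ^ j * (N - j - 1)! / Zfun w N) atTop
      (𝓝 (α⁻¹ * (Real.exp (-l) * l ^ j / j !)))) ∧
    (∀ j : ℕ, Tendsto (fun N : ℕ => nu w N (fun t => N - (t.children.length + 1) = j)) atTop
      (𝓝 (Real.exp (-l) * l ^ j / j !))) :=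
  ⟨tendsto_choose_mul_pow_mul_factorial_div_Zfun hw_one hw_two hα hw,
    tendsto_nu_sub_degree hw_one hw_two hα hw⟩

theorem tendsto_ite_eq_two_div_factorial (l : ℝ) :
    Tendsto (fun n : ℕ => (if n + 1 = 2 then l else ((n + 1 - 1)! : ℝ)) / n !) atTop (𝓝 1) :=
  tendsto_const_nhds.congr' <| by
    filter_upwards [eventually_ne_atTop 1] with n hn
    rw [if_neg (by omega), Nat.add_sub_cancel, div_self (Nat.cast_ne_zero.2 n.factorial_ne_zero)]

end PoissonLimit

/-- Theorem 2: with `w_2 = λ` and `w_n = (n−1)!` otherwise, for each fixed `j`,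
`C(N−j−1,j)·λ^j·(N−j−1)!/Z_N → e^{−λ}λ^j/j!`, and consequently
`N − σ(s) →d Poisson(λ)` (here `σ(s) = #children(s) + 1`). -/
theorem stmt_6 (l : ℝ) (hl : 0 < l) :
    (∀ j : ℕ, Tendsto (fun N : ℕ =>
        ((N - j - 1).choose j : ℝ) * l ^ j * ((N - j - 1).factorial : ℝ) /
          Zfun (fun n => if n = 2 then l else ((n - 1).factorial : ℝ)) N)
      atTop (nhds (Real.exp (-l) * l ^ j / j.factorial))) ∧
    (∀ j : ℕ, Tendsto (fun N : ℕ =>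
        nu (fun n => if n = 2 then l else ((n - 1).factorial : ℝ)) N
          (fun t => N - (t.children.length + 1) = j))
      atTop (nhds (Real.exp (-l) * l ^ j / j.factorial))) := by
  simpa using stmt_6_general (w := fun n => if n = 2 then l else ((n - 1).factorial : ℝ))
    (by simp) (if_pos rfl) one_ne_zero (tendsto_ite_eq_two_div_factorial l)
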